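/- Let τ : ℝ → ℝ be a smooth bijection with τ'(t) > 0 for all t, let H : ℝ⁹ → ℝ be smooth, and let ψ : ℝ³ → ℝ be a smooth solution of ζ_t + ψ_x ζ_y − ψ_y ζ_x = H(t, x, y, ζ, ζ_x, ζ_y, ζ_xx, ζ_xy, ζ_yy), where ζ := ψ_xx + ψ_yy. Define ψ̃(s,x,y) := ψ(τ⁻¹(s), x, y)/τ'(τ⁻¹(s)) and H̃(s, x, y, w, w₁, w₂, w₁₁, w₁₂, w₂₂) := τ'(t)^{−2}·[H(t, x, y, τ'(t)w, τ'(t)w₁, τ'(t)w₂, τ'(t)w₁₁, τ'(t)w₁₂, τ'(t)w₂₂) − τ''(t)·w], where t := τ⁻¹(s). Then ψ̃ is a smooth solution of ζ̃_s + ψ̃_x ζ̃_y − ψ̃_y ζ̃_x = H̃(s, x, y, ζ̃, ζ̃_x, ζ̃_y, ζ̃_xx, ζ̃_xy, ζ̃_yy), where ζ̃ := ψ̃_xx + ψ̃_yy. -/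

import Mathlib

noncomputable section

abbrev V9 := ℝ × ℝ × ℝ × ℝ × ℝ × ℝ × ℝ × ℝ × ℝ

/-- Partial derivative with respect to t. -/
def dT (f : ℝ × ℝ × ℝ → ℝ) (p : ℝ × ℝ × ℝ) : ℝ := fderiv ℝ f p (1, 0, 0)
/-- Partial derivative with respect to x. -/
def dX (f : ℝ × ℝ × ℝ → ℝ) (p : ℝ × ℝ × ℝ) : ℝ := fderiv ℝ f p (0, 1, 0)
/-- Partial derivative with respect to y. -/
def dY (f : ℝ × ℝ × ℝ → ℝ) (p : ℝ × ℝ × ℝ) : ℝ := fderiv ℝ f p (0, 0, 1)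

/-- The vorticity ζ := ψ_xx + ψ_yy. -/
def vort (ψ : ℝ × ℝ × ℝ → ℝ) : ℝ × ℝ × ℝ → ℝ := fun p => dX (dX ψ) p + dY (dY ψ) p

/-- ψ is a smooth solution of the generalized vorticity equation
ζ_t + ψ_x ζ_y − ψ_y ζ_x = H(t, x, y, ζ, ζ_x, ζ_y, ζ_xx, ζ_xy, ζ_yy). -/
def IsHVortSol (H : V9 → ℝ) (ψ : ℝ × ℝ × ℝ → ℝ) : Prop :=
  ContDiff ℝ (⊤ : ℕ∞) ψ ∧ ∀ p : ℝ × ℝ × ℝ,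
    dT (vort ψ) p + dX ψ p * dY (vort ψ) p - dY ψ p * dX (vort ψ) p
      = H (p.1, p.2.1, p.2.2, vort ψ p, dX (vort ψ) p, dY (vort ψ) p,
           dX (dX (vort ψ)) p, dX (dY (vort ψ)) p, dY (dY (vort ψ)) p)

lemma tr_fderiv (g c : ℝ → ℝ) (g' c' : ℝ) (F : ℝ × ℝ × ℝ → ℝ) (p : ℝ × ℝ × ℝ)
    (hg : HasDerivAt g g' p.1) (hc : HasDerivAt c c' p.1)
    (hF : DifferentiableAt ℝ F (g p.1, p.2.1, p.2.2)) (v : ℝ × ℝ × ℝ) :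
    fderiv ℝ (fun p : ℝ × ℝ × ℝ => c p.1 * F (g p.1, p.2.1, p.2.2)) p v =
      c p.1 * fderiv ℝ F (g p.1, p.2.1, p.2.2) (v.1 * g', v.2.1, v.2.2)
        + v.1 * c' * F (g p.1, p.2.1, p.2.2) := by
  have h1 : HasFDerivAt (fun p : ℝ × ℝ × ℝ => p.1) (ContinuousLinearMap.fst ℝ ℝ (ℝ × ℝ)) p :=
    hasFDerivAt_fst
  have h2 : HasFDerivAt (fun p : ℝ × ℝ × ℝ => p.2) (ContinuousLinearMap.snd ℝ ℝ (ℝ × ℝ)) p :=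
    hasFDerivAt_snd
  have hg1 := hg.hasFDerivAt.comp p h1
  have hc1 := hc.hasFDerivAt.comp p h1
  have hin := hg1.prodMk h2
  have hF1 := HasFDerivAt.comp p (f := fun p : ℝ × ℝ × ℝ => ((g ∘ fun p : ℝ × ℝ × ℝ => p.1) p, p.2))
    hF.hasFDerivAt hin
  have := hc1.mul hF1
  have e := this.fderiv
  have e2 : fderiv ℝ (fun p : ℝ × ℝ × ℝ => c p.1 * F (g p.1, p.2.1, p.2.2)) p v = _ :=
    congrArg (fun L => L v) e
  rw [e2]
  simp
  ring

lemma contDiff_dir (F : ℝ × ℝ × ℝ → ℝ) (hF : ContDiff ℝ (⊤ : ℕ∞) F) (v : ℝ × ℝ × ℝ) :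
    ContDiff ℝ (⊤ : ℕ∞) (fun p => fderiv ℝ F p v) :=
  (hF.fderiv_right (m := (⊤ : ℕ∞)) (by simp)).clm_apply contDiff_const

lemma contDiff_dX (F : ℝ × ℝ × ℝ → ℝ) (hF : ContDiff ℝ (⊤ : ℕ∞) F) :
    ContDiff ℝ (⊤ : ℕ∞) (dX F) := contDiff_dir F hF _

lemma contDiff_dY (F : ℝ × ℝ × ℝ → ℝ) (hF : ContDiff ℝ (⊤ : ℕ∞) F) :
    ContDiff ℝ (⊤ : ℕ∞) (dY F) := contDiff_dir F hF _

lemma contDiff_vort (F : ℝ × ℝ × ℝ → ℝ) (hF : ContDiff ℝ (⊤ : ℕ∞) F) :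
    ContDiff ℝ (⊤ : ℕ∞) (vort F) :=
  (contDiff_dX _ (contDiff_dX _ hF)).add (contDiff_dY _ (contDiff_dY _ hF))

lemma tr_inv (τ : ℝ → ℝ) (hτ : ContDiff ℝ (⊤ : ℕ∞) τ) (hbij : Function.Bijective τ)
    (hpos : ∀ t : ℝ, 0 < deriv τ t) : ContDiff ℝ (⊤ : ℕ∞) (Function.invFun τ) := by
  have hm : StrictMono τ := strictMono_of_deriv_pos hpos
  let e := (hm.orderIsoOfSurjective τ hbij.2).toHomeomorph
  have he : Function.invFun τ = e.symm := by
    funext s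
    apply hbij.1
    rw [Function.rightInverse_invFun hbij.2 s]
    exact (e.apply_symm_apply s).symm
  rw [he]
  exact e.contDiff_symm_deriv (f' := deriv τ) (fun t => (hpos t).ne')
    (fun t => (hτ.differentiable (by simp) t).hasDerivAt) hτ

theorem time_reparameterization_equivalence
    (τ : ℝ → ℝ) (hτ : ContDiff ℝ (⊤ : ℕ∞) τ) (hbij : Function.Bijective τ)
    (hpos : ∀ t : ℝ, 0 < deriv τ t)
    (H : V9 → ℝ) (hH : ContDiff ℝ (⊤ : ℕ∞) H)
    (ψ : ℝ × ℝ × ℝ → ℝ) (h : IsHVortSol H ψ) :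
    IsHVortSol
      (fun q => match q with
        | (s, x, y, w, w1, w2, w11, w12, w22) =>
          (deriv τ (Function.invFun τ s) ^ 2)⁻¹ *
            (H (Function.invFun τ s, x, y,
                deriv τ (Function.invFun τ s) * w,
                deriv τ (Function.invFun τ s) * w1,
                deriv τ (Function.invFun τ s) * w2,
                deriv τ (Function.invFun τ s) * w11,
                deriv τ (Function.invFun τ s) * w12,
                deriv τ (Function.invFun τ s) * w22)
              - deriv (deriv τ) (Function.invFun τ s) * w))
      (fun p => ψ (Function.invFun τ p.1, p.2.1, p.2.2) / deriv τ (Function.invFun τ p.1)) := by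
  obtain ⟨hψ, heq⟩ := h
  have hgs := tr_inv τ hτ hbij hpos
  have hτg : ∀ s, τ (Function.invFun τ s) = s := Function.rightInverse_invFun hbij.2
  generalize Function.invFun τ = g at hgs hτg ⊢
  have hτ' : ContDiff ℝ (⊤ : ℕ∞) (deriv τ) :=
    ((contDiff_infty_iff_deriv (𝕜 := ℝ)).1 hτ).2
  have hg : ∀ s, HasDerivAt g (deriv τ (g s))⁻¹ s := fun s =>
    HasDerivAt.of_local_left_inverse hgs.continuous.continuousAt
      (hτ.differentiable (by simp) _).hasDerivAt (hpos _).ne' (Filter.Eventually.of_forall hτg)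
  have hcs : ContDiff ℝ (⊤ : ℕ∞) (fun s => (deriv τ (g s))⁻¹) :=
    (hτ'.comp hgs).inv (fun s => (hpos _).ne')
  have hc : ∀ s, HasDerivAt (fun s => (deriv τ (g s))⁻¹)
      (-(deriv (deriv τ) (g s) * (deriv τ (g s))⁻¹) / deriv τ (g s) ^ 2) s := fun s =>
    (((hτ'.differentiable (by simp) (g s)).hasDerivAt).comp s (hg s)).inv (hpos _).ne'
  let T : (ℝ × ℝ × ℝ → ℝ) → (ℝ × ℝ × ℝ → ℝ) := fun F p =>
    (deriv τ (g p.1))⁻¹ * F (g p.1, p.2.1, p.2.2)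
  have hX : ∀ F, ContDiff ℝ (⊤ : ℕ∞) F → dX (T F) = T (dX F) := by
    intro F hF
    funext p
    have := tr_fderiv g _ _ _ F p (hg p.1) (hc p.1) (hF.differentiable (by simp) _) (0, 1, 0)
    simpa [dX, T] using this
  have hY : ∀ F, ContDiff ℝ (⊤ : ℕ∞) F → dY (T F) = T (dY F) := by
    intro F hF
    funext p
    have := tr_fderiv g _ _ _ F p (hg p.1) (hc p.1) (hF.differentiable (by simp) _) (0, 0, 1)
    simpa [dY, T] using this
  have hT : ∀ F, ContDiff ℝ (⊤ : ℕ∞) F → ∀ p, dT (T F) p =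
      (deriv τ (g p.1))⁻¹ * ((deriv τ (g p.1))⁻¹ * dT F (g p.1, p.2.1, p.2.2)) +
      (-(deriv (deriv τ) (g p.1) * (deriv τ (g p.1))⁻¹) / deriv τ (g p.1) ^ 2)
        * F (g p.1, p.2.1, p.2.2) := by
    intro F hF p
    have := tr_fderiv g _ _ _ F p (hg p.1) (hc p.1) (hF.differentiable (by simp) _) (1, 0, 0)
    have e : (((deriv τ (g p.1))⁻¹, 0, 0) : ℝ × ℝ × ℝ)
        = (deriv τ (g p.1))⁻¹ • ((1, 0, 0) : ℝ × ℝ × ℝ) := by simp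
    simp only [one_mul] at this
    rw [e, map_smul, smul_eq_mul] at this
    exact this
  have hV : vort (T ψ) = T (vort ψ) := by
    funext p
    simp only [vort]
    rw [hX _ hψ, hY _ hψ, hX _ (contDiff_dX _ hψ), hY _ (contDiff_dY _ hψ)]
    simp only [T, vort]
    ring
  have hψT : (fun p : ℝ × ℝ × ℝ => ψ (g p.1, p.2.1, p.2.2) / deriv τ (g p.1)) = T ψ := by
    funext p
    simp only [T]
    rw [div_eq_inv_mul]
  rw [hψT]
  have hζ := contDiff_vort _ hψ
  refine ⟨?_, ?_⟩
  · exact (hcs.comp contDiff_fst).mul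
      (hψ.comp ((hgs.comp contDiff_fst).prodMk contDiff_snd))
  · intro p
    have hp := heq (g p.1, p.2.1, p.2.2)
    have hne : deriv τ (g p.1) ≠ 0 := (hpos _).ne'
    have hcan : ∀ a : ℝ, deriv τ (g p.1) * ((deriv τ (g p.1))⁻¹ * a) = a := fun a => by
      field_simp
    rw [hV, hT _ hζ, hX _ hψ, hY _ hψ, hX _ hζ, hY _ hζ, hX _ (contDiff_dX _ hζ),
      hX _ (contDiff_dY _ hζ), hY _ (contDiff_dY _ hζ)]
    simp only [T, hcan]
    simp only at hp
    rw [← hp]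
    field_simp
    ring
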